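/- Let m and ℓ be positive integers, let k, i be integers and let p satisfy 0 < p < ℓ. The element x = Δ^k s(i,p) of G(m,ℓ) is periodic if and only if m divides p + kℓ. Moreover, if m divides p + kℓ, then x^{ℓ/g} = Δ^{(p+kℓ)/g}, where g = gcd(p,ℓ). -/

import Mathlib

/-- The word `a_i a_{i+1} ⋯ a_{i+p-1}` (indices mod `m`) in the free group on `ZMod m`. -/
def circWord (m : ℕ) (i : ZMod m) (p : ℕ) : FreeGroup (ZMod m) :=
  ((List.range p).map (fun k => FreeGroup.of (i + (k : ZMod m)))).prod

/-- The defining relations of the circular group `G(m,ℓ)`. -/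
def circRels (m ℓ : ℕ) : Set (FreeGroup (ZMod m)) :=
  { r | ∃ i : ZMod m, r = circWord m i ℓ * (circWord m (i + 1) ℓ)⁻¹ }

/-- The circular group `G(m,ℓ)`. -/
abbrev CircularGroup (m ℓ : ℕ) := PresentedGroup (circRels m ℓ)

/-- The generator `a_i` of the circular group `G(m,ℓ)`. -/
def circGen (m ℓ : ℕ) (i : ZMod m) : CircularGroup m ℓ :=
  PresentedGroup.of i

/-- The element `s(i,p) = a_i a_{i+1} ⋯ a_{i+p-1}` of the circular group `G(m,ℓ)`. -/
def circS (m ℓ : ℕ) (i : ZMod m) (p : ℕ) : CircularGroup m ℓ :=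
  ((List.range p).map (fun k => circGen m ℓ (i + (k : ZMod m)))).prod

/-- The Garside element `Δ = s(0,ℓ)` of the circular group `G(m,ℓ)`. -/
def circDelta (m ℓ : ℕ) : CircularGroup m ℓ := circS m ℓ 0 ℓ

/-- An element `x` of `G(m,ℓ)` is *periodic* if `x^a = Δ^b` for some nonzero
integer `a` and some integer `b`. -/
def CircIsPeriodic (m ℓ : ℕ) (x : CircularGroup m ℓ) : Prop :=
  ∃ a : ℤ, a ≠ 0 ∧ ∃ b : ℤ, x ^ a = (circDelta m ℓ) ^ b

/-!
Since `Δ = s(i,ℓ)` for every `i`, conjugation by `Δ` shifts the indices by `ℓ`. If `m ∣ p + kℓ`,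
then moving every `Δ^k` in `(Δ^k s(i,p))^n` to the right turns the other factors into consecutive
blocks, which join up to `s(i+p,np)`; for `n = ℓ/g` this block is a power of `Δ`.

Conversely, let `t` and `b` be the generators of the factors of the free product `ℤ/m * ℤ/ℓ`. The
map `a_j ↦ t^(-j) b t^(j+1)` sends `Δ` to `t^ℓ`, which has finite order, and `Δ^k s(i,p)` to a
conjugate of `b^p t^(p+kℓ)`, which has infinite order unless one of its two factors is trivial.
For `m = 0` the first factor is replaced by its finite quotients.
-/

section FreeProduct

open Monoid

variable {ι : Type*} {M : ι → Type*} [∀ i, Monoid (M i)] {i j : ι}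

theorem neWord_prod_ne_one (w : CoprodI.NeWord M i j) : w.prod ≠ 1 := by
  classical
  intro h
  have hempty : w.toWord = CoprodI.Word.empty := CoprodI.Word.equiv.symm.injective h
  exact w.toList_ne_nil (congrArg CoprodI.Word.toList hempty)

theorem exists_neWord_prod_eq_pow (hij : i ≠ j) {u : M i} {v : M j} (hu : u ≠ 1) (hv : v ≠ 1)
    (n : ℕ) : ∃ w : CoprodI.NeWord M i j, w.prod = (CoprodI.of u * CoprodI.of v) ^ (n + 1) := by
  let uv : CoprodI.NeWord M i j := .append (.singleton u hu) hij (.singleton v hv)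
  induction n with
  | zero => exact ⟨uv, by simp [uv]⟩
  | succ n ih =>
    obtain ⟨w, hw⟩ := ih
    exact ⟨.append w hij.symm uv, by simp [uv, hw, pow_succ]⟩

theorem not_isOfFinOrder_of_mul_of (hij : i ≠ j) {u : M i} {v : M j} (hu : u ≠ 1) (hv : v ≠ 1) :
    ¬ IsOfFinOrder (CoprodI.of u * CoprodI.of v : CoprodI M) := by
  intro h
  obtain ⟨n, hn, hpow⟩ := isOfFinOrder_iff_pow_eq_one.1 h
  obtain ⟨w, hw⟩ := exists_neWord_prod_eq_pow hij hu hv (n - 1)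
  rw [Nat.sub_add_cancel hn, hpow] at hw
  exact neWord_prod_ne_one w hw

end FreeProduct

theorem circS_zero (m ℓ : ℕ) (i : ZMod m) : circS m ℓ i 0 = 1 := rfl

theorem circS_add (m ℓ : ℕ) (i : ZMod m) (p q : ℕ) :
    circS m ℓ i (p + q) = circS m ℓ i p * circS m ℓ (i + p) q := by
  simp [circS, List.range_add, ← List.map_eq_flatMap, Function.comp_def, add_assoc]

theorem mk_circWord (m ℓ : ℕ) (i : ZMod m) (p : ℕ) :
    PresentedGroup.mk (circRels m ℓ) (circWord m i p) = circS m ℓ i p := by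
  simp only [circWord, circS, map_list_prod, List.map_map]
  rfl

theorem circS_index_add_one (m ℓ : ℕ) (i : ZMod m) :
    circS m ℓ (i + 1) ℓ = circS m ℓ i ℓ := by
  have h := PresentedGroup.one_of_mem (rels := circRels m ℓ) ⟨i, rfl⟩
  rw [map_mul, map_inv, mk_circWord, mk_circWord, mul_inv_eq_one] at h
  exact h.symm

theorem circS_eq_circDelta (m ℓ : ℕ) (i : ZMod m) : circS m ℓ i ℓ = circDelta m ℓ := by
  obtain ⟨n, rfl⟩ := ZMod.intCast_surjective i
  induction n using Int.induction_on with
  | zero => rw [Int.cast_zero, circDelta]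
  | succ n ih => rw [Int.cast_add, Int.cast_one, circS_index_add_one, ih]
  | pred n ih => rw [← circS_index_add_one, Int.cast_sub, Int.cast_one, sub_add_cancel, ih]

theorem circS_mul_eq_circDelta_pow (m ℓ : ℕ) (i : ZMod m) (q : ℕ) :
    circS m ℓ i (q * ℓ) = circDelta m ℓ ^ q := by
  induction q with
  | zero => rw [zero_mul, circS_zero, pow_zero]
  | succ q ih => rw [add_mul, one_mul, circS_add, ih, circS_eq_circDelta, pow_succ]

theorem semiconjBy_circDelta (m ℓ : ℕ) (i : ZMod m) (p : ℕ) :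
    SemiconjBy (circDelta m ℓ) (circS m ℓ (i + ℓ) p) (circS m ℓ i p) :=
  calc circDelta m ℓ * circS m ℓ (i + ℓ) p
    _ = circS m ℓ i (ℓ + p) := by rw [circS_add, circS_eq_circDelta]
    _ = circS m ℓ i p * circDelta m ℓ := by rw [add_comm, circS_add, circS_eq_circDelta]

theorem semiconjBy_circDelta_zpow (m ℓ : ℕ) (k : ℤ) (i : ZMod m) (p : ℕ) :
    SemiconjBy (circDelta m ℓ ^ k) (circS m ℓ (i + k * ℓ) p) (circS m ℓ i p) := by
  induction k using Int.induction_on with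
  | zero => simp
  | succ n ih =>
    have hidx : i + ((n + 1 : ℤ) : ZMod m) * ℓ = i + (n : ℤ) * ℓ + ℓ := by
      push_cast
      ring
    rw [hidx, zpow_add_one]
    exact ih.mul_left (semiconjBy_circDelta m ℓ _ p)
  | pred n ih =>
    have hidx : i + ((-n : ℤ) : ZMod m) * ℓ = i + ((-n - 1 : ℤ) : ZMod m) * ℓ + ℓ := by
      push_cast
      ring
    rw [hidx] at ih
    rw [zpow_sub_one]
    exact ih.mul_left (semiconjBy_circDelta m ℓ _ p).inv_symm_left

section PowerIdentity

variable {m ℓ p : ℕ} {k : ℤ}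

theorem semiconjBy_circDelta_zpow_of_dvd (h : (m : ℤ) ∣ p + k * ℓ) (n : ℤ) (i : ZMod m) (q : ℕ) :
    SemiconjBy (circDelta m ℓ ^ (n * k)) (circS m ℓ i q) (circS m ℓ (i + n * p) q) := by
  have hp : (p : ZMod m) + k * ℓ = 0 := by
    exact_mod_cast (ZMod.intCast_zmod_eq_zero_iff_dvd _ m).2 h
  convert semiconjBy_circDelta_zpow m ℓ (n * k) (i + n * p) q using 2
  push_cast
  linear_combination -(n : ZMod m) * hp

theorem circDelta_zpow_mul_circS_pow (h : (m : ℤ) ∣ p + k * ℓ) (i : ZMod m) (n : ℕ) :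
    (circDelta m ℓ ^ k * circS m ℓ i p) ^ n =
      circS m ℓ (i + p) (n * p) * circDelta m ℓ ^ (n * k) := by
  induction n with
  | zero => simp [circS_zero]
  | succ n ih =>
    have hidx : i + ((n + 1 : ℤ) : ZMod m) * p = i + p + (n * p : ℕ) := by
      push_cast
      ring
    have hshift := hidx ▸ (semiconjBy_circDelta_zpow_of_dvd h (n + 1) i p).eq
    calc (circDelta m ℓ ^ k * circS m ℓ i p) ^ (n + 1)
      _ = circS m ℓ (i + p) (n * p) * (circDelta m ℓ ^ ((n + 1) * k) * circS m ℓ i p) := by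
        rw [pow_succ, ih, add_mul, one_mul, zpow_add]
        simp only [mul_assoc]
      _ = circS m ℓ (i + p) (n * p) * circS m ℓ (i + p + (n * p : ℕ)) p *
          circDelta m ℓ ^ ((n + 1) * k) := by
        rw [hshift, mul_assoc]
      _ = circS m ℓ (i + p) ((n + 1) * p) * circDelta m ℓ ^ ((n + 1 : ℕ) * k) := by
        rw [← circS_add, ← Nat.succ_mul, Nat.cast_succ]

theorem circDelta_zpow_mul_circS_pow_div_gcd (h : (m : ℤ) ∣ p + k * ℓ) (i : ZMod m) :
    (circDelta m ℓ ^ k * circS m ℓ i p) ^ (ℓ / p.gcd ℓ) =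
      circDelta m ℓ ^ ((p + k * ℓ) / (p.gcd ℓ : ℤ)) := by
  have hlen : ℓ / p.gcd ℓ * p = p / p.gcd ℓ * ℓ := by
    rw [Nat.div_mul_right_comm (p.gcd_dvd_right ℓ), Nat.div_mul_right_comm (p.gcd_dvd_left ℓ),
      mul_comm]
  have hexp : (p + k * ℓ) / (p.gcd ℓ : ℤ) = (p / p.gcd ℓ : ℕ) + (ℓ / p.gcd ℓ : ℕ) * k := by
    rw [Int.add_ediv_of_dvd_left (Int.natCast_dvd_natCast.2 (p.gcd_dvd_left ℓ)),
      Int.mul_ediv_assoc _ (Int.natCast_dvd_natCast.2 (p.gcd_dvd_right ℓ)), mul_comm k,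
      Int.natCast_ediv, Int.natCast_ediv]
  rw [circDelta_zpow_mul_circS_pow h, hlen, circS_mul_eq_circDelta_pow, hexp, zpow_add,
    zpow_natCast]

end PowerIdentity

section Homomorphisms

variable {H : Type*} [Group H] {m ℓ : ℕ} (φ : Multiplicative (ZMod m) →* H) (b : H)

theorem lift_circWord (i : ZMod m) (p : ℕ) :
    FreeGroup.lift (fun j ↦ (φ (.ofAdd j))⁻¹ * b * φ (.ofAdd (j + 1))) (circWord m i p) =
      (φ (.ofAdd i))⁻¹ * b ^ p * φ (.ofAdd (i + p)) := by
  induction p with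
  | zero => simp [circWord]
  | succ p ih =>
    have hsucc : circWord m i (p + 1) = circWord m i p * FreeGroup.of (i + p) := by
      simp [circWord, List.range_succ]
    rw [hsucc, map_mul, ih, FreeGroup.lift_apply_of, pow_succ, Nat.cast_succ, ← add_assoc]
    group

/-- The homomorphism `a_j ↦ t^(-j) b t^(j+1)` from `G(m,ℓ)` to a group with elements `t`, `b` such
that `t^m = b^ℓ = 1`. The element `t` is encoded as the homomorphism `φ : j ↦ t^j` on `ℤ/m`. -/
def circLift {b : H} (hb : b ^ ℓ = 1) : CircularGroup m ℓ →* H :=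
  PresentedGroup.toGroup (f := fun j ↦ (φ (.ofAdd j))⁻¹ * b * φ (.ofAdd (j + 1))) <| by
    rintro _ ⟨i, rfl⟩
    rw [map_mul, map_inv, lift_circWord, lift_circWord, hb, mul_inv_eq_one]
    simp only [ofAdd_add, map_mul]
    group

variable {b} (hb : b ^ ℓ = 1)

theorem circLift_circS (i : ZMod m) (p : ℕ) :
    circLift φ hb (circS m ℓ i p) = (φ (.ofAdd i))⁻¹ * b ^ p * φ (.ofAdd (i + p)) := by
  rw [← mk_circWord, ← lift_circWord]
  rfl

theorem circLift_circDelta : circLift φ hb (circDelta m ℓ) = φ (.ofAdd (ℓ : ZMod m)) := by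
  simp [circDelta, circLift_circS, hb]

theorem isConj_circLift_circDelta_zpow_mul_circS (k : ℤ) (i : ZMod m) (p : ℕ) :
    IsConj (circLift φ hb (circDelta m ℓ ^ k * circS m ℓ i p))
      (b ^ p * φ (.ofAdd ((p + k * ℓ : ℤ) : ZMod m))) := by
  let t (j : ZMod m) : H := φ (.ofAdd j)
  have t_add (j j' : ZMod m) : t (j + j') = t j * t j' := by
    rw [← map_mul, ← ofAdd_add]
  have t_mul (j : ZMod m) : t (k * j) = t j ^ k := by
    rw [← map_zpow, ← ofAdd_zsmul, zsmul_eq_mul]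
  have hleft : t (i - k * ℓ) * t ℓ ^ k = t i := by
    rw [← t_mul, ← t_add, sub_add_cancel]
  have hright : t (p + k * ℓ) * t (i - k * ℓ) = t (i + p) := by
    rw [← t_add]
    ring_nf
  refine isConj_iff.2 ⟨t (i - k * ℓ), ?_⟩
  calc t (i - k * ℓ) * circLift φ hb (circDelta m ℓ ^ k * circS m ℓ i p) * (t (i - k * ℓ))⁻¹
    _ = t (i - k * ℓ) * t ℓ ^ k * (t i)⁻¹ * b ^ p * t (i + p) * (t (i - k * ℓ))⁻¹ := by
      rw [map_mul, map_zpow, circLift_circDelta, circLift_circS]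
      simp only [t, mul_assoc]
    _ = b ^ p * t ((p + k * ℓ : ℤ) : ZMod m) := by
      rw [hleft, ← hright]
      push_cast
      group

theorem CircIsPeriodic.isOfFinOrder_map {x : CircularGroup m ℓ} (hx : CircIsPeriodic m ℓ x)
    (f : CircularGroup m ℓ →* H) (hΔ : IsOfFinOrder (f (circDelta m ℓ))) :
    IsOfFinOrder (f x) := by
  obtain ⟨a, ha, c, hac⟩ := hx
  obtain ⟨n, hn, hΔn⟩ := isOfFinOrder_iff_zpow_eq_one.1 hΔ
  refine isOfFinOrder_iff_zpow_eq_one.2 ⟨a * n, mul_ne_zero ha hn, ?_⟩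
  rw [zpow_mul, ← map_zpow, hac, map_zpow, zpow_comm, hΔn, one_zpow]

end Homomorphisms

/-- The factors `ℤ/n` (at `false`) and `ℤ/ℓ` (at `true`) of the free product `ℤ/n * ℤ/ℓ`, the
target of the homomorphism that detects elements of `G(m,ℓ)` which are not periodic. -/
abbrev CyclicFactor (n ℓ : ℕ) (c : Bool) : Type := Multiplicative (ZMod (bif c then ℓ else n))

section Divisibility

variable {m ℓ p : ℕ} {k : ℤ} {i : ZMod m}

theorem CircIsPeriodic.dvd_of_dvd {n : ℕ} (hn : 0 < n) (hnm : n ∣ m) (hp : ¬ ℓ ∣ p)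
    (h : CircIsPeriodic m ℓ (circDelta m ℓ ^ k * circS m ℓ i p)) : (n : ℤ) ∣ p + k * ℓ := by
  have : NeZero n := ⟨hn.ne'⟩
  let ιn : Multiplicative (ZMod n) →* Monoid.CoprodI (CyclicFactor n ℓ) :=
    Monoid.CoprodI.of (M := CyclicFactor n ℓ) (i := false)
  let ιℓ : Multiplicative (ZMod ℓ) →* Monoid.CoprodI (CyclicFactor n ℓ) :=
    Monoid.CoprodI.of (M := CyclicFactor n ℓ) (i := true)
  let φ := ιn.comp (AddMonoidHom.toMultiplicative (ZMod.castHom hnm (ZMod n)).toAddMonoidHom)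
  have hb : ιℓ (.ofAdd 1) ^ ℓ = 1 := by
    rw [← map_pow, ← ofAdd_nsmul, nsmul_one, ZMod.natCast_self, ofAdd_zero, map_one]
  have hΔ : IsOfFinOrder (circLift φ hb (circDelta m ℓ)) := by
    rw [circLift_circDelta]
    exact ιn.isOfFinOrder (isOfFinOrder_of_finite _)
  have hfin := (isConj_circLift_circDelta_zpow_mul_circS φ hb k i p).isOfFinOrder
    (h.isOfFinOrder_map _ hΔ)
  by_contra hdvd
  have hu : Multiplicative.ofAdd (1 : ZMod ℓ) ^ p ≠ 1 := by
    rwa [← ofAdd_nsmul, nsmul_one, ofAdd_eq_one.ne, Ne, ZMod.natCast_eq_zero_iff]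
  have hv : Multiplicative.ofAdd ((p + k * ℓ : ℤ) : ZMod n) ≠ 1 := by
    rwa [ofAdd_eq_one.ne, Ne, ZMod.intCast_zmod_eq_zero_iff_dvd]
  have hφ : φ (.ofAdd ((p + k * ℓ : ℤ) : ZMod m)) = ιn (.ofAdd ((p + k * ℓ : ℤ) : ZMod n)) :=
    congrArg (fun z ↦ ιn (.ofAdd z)) (map_intCast (ZMod.castHom hnm (ZMod n)) (p + k * ℓ))
  rw [hφ, ← map_pow] at hfin
  exact not_isOfFinOrder_of_mul_of (M := CyclicFactor n ℓ) (i := true) (j := false)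
    (by decide) hu hv hfin

theorem CircIsPeriodic.dvd (hp : ¬ ℓ ∣ p)
    (h : CircIsPeriodic m ℓ (circDelta m ℓ ^ k * circS m ℓ i p)) : (m : ℤ) ∣ p + k * ℓ := by
  obtain rfl | hm := m.eq_zero_or_pos
  · have hdvd := h.dvd_of_dvd (Nat.succ_pos (p + k * ℓ).natAbs) (dvd_zero _) hp
    rw [Int.eq_zero_of_dvd_of_natAbs_lt_natAbs hdvd (Nat.lt_succ_self _)]
    exact dvd_zero _
  · exact h.dvd_of_dvd hm dvd_rfl hp

end Divisibility

theorem periodic_elements_circular_general (m ℓ : ℕ) (hℓ : 0 < ℓ) (k : ℤ) (i : ZMod m) (p : ℕ)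
    (hp : ¬ ℓ ∣ p) :
    (CircIsPeriodic m ℓ (circDelta m ℓ ^ k * circS m ℓ i p) ↔ (m : ℤ) ∣ p + k * ℓ) ∧
    ((m : ℤ) ∣ p + k * ℓ →
      (circDelta m ℓ ^ k * circS m ℓ i p) ^ (ℓ / p.gcd ℓ) =
        circDelta m ℓ ^ ((p + k * ℓ) / (p.gcd ℓ : ℤ))) := by
  have hpow (h : (m : ℤ) ∣ p + k * ℓ) := circDelta_zpow_mul_circS_pow_div_gcd h i
  have hpos : 0 < ℓ / p.gcd ℓ := Nat.div_pos (Nat.gcd_le_right p hℓ) (Nat.gcd_pos_of_pos_right p hℓ)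
  refine ⟨⟨fun h ↦ h.dvd hp, fun h ↦ ?_⟩, hpow⟩
  exact ⟨(ℓ / p.gcd ℓ : ℕ), Int.natCast_ne_zero.2 hpos.ne', _, by rw [zpow_natCast, hpow h]⟩

/-- `Δ^k s(i,p)` (with `0 < p < ℓ`) is periodic iff `m ∣ p + kℓ`, in which case
`(Δ^k s(i,p))^(ℓ/g) = Δ^((p+kℓ)/g)` where `g = gcd(p,ℓ)`. -/
theorem periodic_elements_circular (m ℓ : ℕ) (hm : 0 < m) (hℓ : 0 < ℓ)
    (k i : ℤ) (p : ℕ) (hp : 0 < p) (hpℓ : p < ℓ) :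
    (CircIsPeriodic m ℓ ((circDelta m ℓ) ^ k * circS m ℓ (i : ZMod m) p) ↔
      (m : ℤ) ∣ (p + k * ℓ)) ∧
    ((m : ℤ) ∣ (p + k * ℓ) →
      ((circDelta m ℓ) ^ k * circS m ℓ (i : ZMod m) p) ^ (ℓ / Nat.gcd p ℓ) =
        (circDelta m ℓ) ^ (((p : ℤ) + k * ℓ) / (Nat.gcd p ℓ : ℤ))) := by
  exact periodic_elements_circular_general m ℓ hℓ k i p (Nat.not_dvd_of_pos_of_lt hp hpℓ)
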